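/- Let w(y) = (1 + √(1−y))^(−1/2), y(x) = 8x(2x+1)/(4x+1)², v(x) = x(2x+1)(4x+1), A(x, z) = w(y(x)·e^z)/w(y(x)), and define the cumulant generating function K(x, z) = log A(x, z) for x > 0 and real z with y(x)·e^z < 1. Then K satisfies the partial differential equation v(x)·∂K/∂x − ∂K/∂z + x = 0 at every such (x, z), and K(x, 0) = 0. -/

import Mathlib

/-!
Write `L = log ∘ w`, so that `K x z = L (y(x) eᶻ) - L (y(x))`. Since `v ∂ₓ y = y`, the operator
`v ∂ₓ - ∂_z` annihilates every function of `y(x) eᶻ`, in particular the first term. For the second,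
`√(1 - y(x)) = 1 / (4x + 1)` makes `L (y(x)) = (log (4x + 1) - log (4x + 2)) / 2` explicit, and
`v ∂ₓ` sends it to `x`.
-/

open Real

noncomputable def w (y : ℝ) : ℝ := (1 + Real.sqrt (1 - y)) ^ (-(1 / 2 : ℝ))

noncomputable def yFun (x : ℝ) : ℝ := 8 * x * (2 * x + 1) / (4 * x + 1) ^ 2

noncomputable def v (x : ℝ) : ℝ := x * (2 * x + 1) * (4 * x + 1)

noncomputable def A (x z : ℝ) : ℝ := w (yFun x * Real.exp z) / w (yFun x)

noncomputable def K (x z : ℝ) : ℝ := Real.log (A x z)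

theorem w_pos (y : ℝ) : 0 < w y := by
  unfold w
  positivity

theorem differentiableAt_w {y : ℝ} (hy : y < 1) : DifferentiableAt ℝ w y := by
  have hsqrt : DifferentiableAt ℝ (fun t : ℝ => √(1 - t)) y :=
    (differentiableAt_id.const_sub 1).sqrt (sub_pos.mpr hy).ne'
  exact (hsqrt.const_add 1).rpow_const (Or.inl (by positivity))

theorem differentiableAt_log_w {y : ℝ} (hy : y < 1) :
    DifferentiableAt ℝ (fun t => log (w t)) y :=
  (differentiableAt_w hy).log (w_pos y).ne'

theorem K_eq_log_sub_log (x z : ℝ) :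
    K x z = log (w (yFun x * exp z)) - log (w (yFun x)) :=
  log_div (w_pos _).ne' (w_pos _).ne'

theorem K_zero_right (x : ℝ) : K x 0 = 0 := by
  rw [K_eq_log_sub_log, exp_zero, mul_one, sub_self]

theorem yFun_eq_one_sub_inv_sq {x : ℝ} (hx : 4 * x + 1 ≠ 0) :
    yFun x = 1 - ((4 * x + 1)⁻¹) ^ 2 := by
  have hsq : (4 * x + 1) ^ 2 ≠ 0 := pow_ne_zero 2 hx
  rw [yFun, div_eq_iff hsq, sub_mul, inv_pow, inv_mul_cancel₀ hsq]
  ring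

theorem hasDerivAt_yFun {x : ℝ} (hx : 4 * x + 1 ≠ 0) :
    HasDerivAt yFun (8 / (4 * x + 1) ^ 3) x := by
  have hlin : HasDerivAt (fun t : ℝ => 4 * t + 1) 4 x := by
    simpa only [mul_one] using ((hasDerivAt_id' x).const_mul 4).add_const 1
  have hrat : HasDerivAt (fun t : ℝ => 1 - ((4 * t + 1)⁻¹) ^ 2) (8 / (4 * x + 1) ^ 3) x := by
    refine (((hlin.fun_inv hx).fun_pow 2).const_sub 1).congr_deriv ?_
    generalize 4 * x + 1 = s
    ring
  refine hrat.congr_of_eventuallyEq ?_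
  filter_upwards [hlin.continuousAt.eventually_ne hx] with t ht
  exact yFun_eq_one_sub_inv_sq ht

theorem v_mul_deriv_yFun {x : ℝ} (hx : 4 * x + 1 ≠ 0) : v x * deriv yFun x = yFun x := by
  rw [(hasDerivAt_yFun hx).deriv, v, yFun]
  field_simp

theorem v_smul_deriv_comp_yFun_mul_exp {E : Type*} [NormedAddCommGroup E] [NormedSpace ℝ E]
    {f : ℝ → E} {x z : ℝ} (hx : 4 * x + 1 ≠ 0) (hf : DifferentiableAt ℝ f (yFun x * exp z)) :
    v x • deriv (fun t => f (yFun t * exp z)) x = deriv (fun t => f (yFun x * exp t)) z := by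
  have hderiv_x := hf.hasDerivAt.scomp x
    ((hasDerivAt_yFun hx).differentiableAt.hasDerivAt.mul_const (exp z))
  have hderiv_z := hf.hasDerivAt.scomp z ((hasDerivAt_exp z).const_mul (yFun x))
  calc v x • deriv (fun t => f (yFun t * exp z)) x
      = v x • (deriv yFun x * exp z) • deriv f (yFun x * exp z) := congrArg _ hderiv_x.deriv
    _ = (yFun x * exp z) • deriv f (yFun x * exp z) := by
      rw [smul_smul, ← mul_assoc, v_mul_deriv_yFun hx]
    _ = deriv (fun t => f (yFun x * exp t)) z := hderiv_z.deriv.symm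

theorem log_w_yFun {x : ℝ} (hx : -1 / 4 < x) :
    log (w (yFun x)) = (log (4 * x + 1) - log (4 * x + 2)) / 2 := by
  have hpos : 0 < 4 * x + 1 := by linarith
  have hsqrt : √(1 - yFun x) = (4 * x + 1)⁻¹ := by
    rw [yFun_eq_one_sub_inv_sq hpos.ne', sub_sub_cancel, sqrt_sq (by positivity)]
  have hsum : 1 + (4 * x + 1)⁻¹ = (4 * x + 2) / (4 * x + 1) := by
    field_simp
    ring
  rw [w, hsqrt, hsum, log_rpow (div_pos (by linarith) hpos), log_div (by linarith) hpos.ne']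
  ring

theorem hasDerivAt_log_w_yFun {x : ℝ} (hx : -1 / 4 < x) :
    HasDerivAt (fun t => log (w (yFun t))) (1 / ((2 * x + 1) * (4 * x + 1))) x := by
  have h₁ : 4 * x + 1 ≠ 0 := by linarith
  have h₂ : 4 * x + 2 ≠ 0 := by linarith
  have hlin : HasDerivAt (fun t : ℝ => 4 * t) 4 x := by
    simpa only [mul_one] using (hasDerivAt_id' x).const_mul 4
  have hlog : HasDerivAt (fun t => (log (4 * t + 1) - log (4 * t + 2)) / 2)
      (1 / ((2 * x + 1) * (4 * x + 1))) x := by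
    refine ((((hlin.add_const 1).log h₁).fun_sub
      ((hlin.add_const 2).log h₂)).div_const 2).congr_deriv ?_
    grind
  refine hlog.congr_of_eventuallyEq ?_
  filter_upwards [eventually_gt_nhds hx] with t ht
  exact log_w_yFun ht

theorem v_mul_deriv_log_w_yFun {x : ℝ} (hx : -1 / 4 < x) :
    v x * deriv (fun t => log (w (yFun t))) x = x := by
  have h₁ : 4 * x + 1 ≠ 0 := by linarith
  have h₂ : 2 * x + 1 ≠ 0 := by linarith
  rw [(hasDerivAt_log_w_yFun hx).deriv, v]
  grind

theorem cgf_pde_general (x z : ℝ) (hx : -1 / 4 < x) (hz : yFun x * exp z < 1) :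
    DifferentiableAt ℝ (fun t => K t z) x ∧
    DifferentiableAt ℝ (fun t => K x t) z ∧
    v x * deriv (fun t => K t z) x - deriv (fun t => K x t) z + x = 0 ∧
    K x 0 = 0 := by
  have hne : 4 * x + 1 ≠ 0 := by linarith
  have hlog := differentiableAt_log_w hz
  have hdiff_x : DifferentiableAt ℝ (fun t => log (w (yFun t * exp z))) x :=
    hlog.fun_comp' (g := fun t => log (w t)) x
      ((hasDerivAt_yFun hne).differentiableAt.mul_const (exp z))
  have hdiff_z : DifferentiableAt ℝ (fun t => log (w (yFun x * exp t))) z :=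
    hlog.fun_comp' (g := fun t => log (w t)) z
      (differentiableAt_exp.const_mul (yFun x))
  have hdiff_base := (hasDerivAt_log_w_yFun hx).differentiableAt
  have htransport := v_smul_deriv_comp_yFun_mul_exp hne hlog
  rw [smul_eq_mul] at htransport
  refine ⟨?_, ?_, ?_, K_zero_right x⟩ <;> simp only [K_eq_log_sub_log]
  · exact hdiff_x.fun_sub hdiff_base
  · exact hdiff_z.sub_const _
  · rw [deriv_fun_sub hdiff_x hdiff_base, deriv_sub_const, mul_sub, htransport,
      v_mul_deriv_log_w_yFun hx]
    ring

theorem cgf_pde (x z : ℝ) (hx : 0 < x) (hz : yFun x * Real.exp z < 1) :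
    DifferentiableAt ℝ (fun t => K t z) x ∧
    DifferentiableAt ℝ (fun t => K x t) z ∧
    v x * deriv (fun t => K t z) x - deriv (fun t => K x t) z + x = 0 ∧
    K x 0 = 0 :=
  cgf_pde_general x z (by linarith) hz
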